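/- Let K ≥ 1, let l_1,…,l_K be positive integers with l_1 + … + l_K = N, let r_1,…,r_K be real numbers, and let S ⊆ ℤ. Let v ∈ ℝ^N be the concatenation of the K blocks (r_j + (l_j − 1 − 2m)/(2l_j))_{m=0,…,l_j−1}. Then for every real q with 0 < q < 1: ∑ over k ∈ ℤ^N with k_1+…+k_N ∈ S of q^((1/2)·∑_{i=1}^N (v_i+k_i)²) equals [∏_{j=1}^K ( ∑ over m ∈ ℤ^{l_j} with m_1+…+m_{l_j}=0 of q^((1/2)·∑_{i=1}^{l_j} (m_i + (l_j+1−2i)/(2l_j))²) )] · [∑ over n ∈ ℤ^K with n_1+…+n_K ∈ S of q^(∑_{j=1}^K (n_j + l_j r_j)²/(2 l_j))]. -/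

import Mathlib

open scoped BigOperators

/-!
Rotating a block `ℤ^l` cyclically while adding `1` to the coordinate that passes the end raises
the coordinate sum by `1` and, up to a permutation of the coordinates, translates `k + ρ/l` by
`(1/l, …, 1/l)`, where `ρ` is the Weyl vector of `A_{l-1}`. Hence each `k ∈ ℤ^l` with sum `n` comes,
by `n` rotations, from a unique `m` with sum `0`, and the quadratic form splits orthogonally into
the centre-of-mass term `(n + l r)² / (2 l)` and the form of `m + ρ/l`. Doing this in every block
leaves `S` as a constraint on the sums `n_j` only, and the exponential of the form factors.
-/

section NonnegativeSums

lemma tsum_eq_toReal_tsum_ofReal {α : Type*} {f : α → ℝ} (hf : ∀ a, 0 ≤ f a) :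
    ∑' a, f a = (∑' a, ENNReal.ofReal (f a)).toReal := by
  rw [ENNReal.tsum_toReal_eq fun a => ENNReal.ofReal_ne_top]
  exact tsum_congr fun a => (ENNReal.toReal_ofReal (hf a)).symm

-- Without summability both sides are `0`: the junk value `∑' = 0` matches `∞.toReal = 0`.
lemma tsum_mul_tsum_of_nonneg {α β : Type*} {f : α → ℝ} {g : β → ℝ}
    (hf : ∀ a, 0 ≤ f a) (hg : ∀ b, 0 ≤ g b) :
    (∑' a, f a) * ∑' b, g b = ∑' p : α × β, f p.1 * g p.2 := by
  rw [tsum_eq_toReal_tsum_ofReal hf, tsum_eq_toReal_tsum_ofReal hg,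
    tsum_eq_toReal_tsum_ofReal fun p : α × β => mul_nonneg (hf p.1) (hg p.2),
    ← ENNReal.toReal_mul]
  simp only [ENNReal.ofReal_mul (hf _), ENNReal.tsum_prod', ENNReal.tsum_mul_left,
    ENNReal.tsum_mul_right]

lemma prod_tsum_of_nonneg {ι : Type*} [Fintype ι] {M : ι → Type*} {f : ∀ j, M j → ℝ}
    (hf : ∀ j x, 0 ≤ f j x) :
    ∏ j, ∑' x, f j x = ∑' m : ∀ j, M j, ∏ j, f j (m j) := by
  refine Fintype.induction_empty_option (P := fun ι _ =>
    ∀ (M : ι → Type _) (f : ∀ j, M j → ℝ), (∀ j x, 0 ≤ f j x) →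
      ∏ j, ∑' x, f j x = ∑' m : ∀ j, M j, ∏ j, f j (m j)) ?of_equiv ?h_empty ?h_option ι M f hf
  case of_equiv =>
    intro α β _ e ih M f hf
    let _ := Fintype.ofEquiv β e.symm
    rw [← e.prod_comp, ih _ _ fun j => hf (e j), ← (Equiv.piCongrLeft M e).tsum_eq]
    refine tsum_congr fun m => ?_
    simp only [← e.prod_comp, Equiv.piCongrLeft_apply_apply]
  case h_empty => simp
  case h_option =>
    intro α _ ih M f hf
    rw [Fintype.prod_option, ih _ _ fun j => hf (some j),
      tsum_mul_tsum_of_nonneg (hf none) fun m => Finset.prod_nonneg fun j _ => hf (some j) (m j),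
      ← Equiv.piOptionEquivProd.tsum_eq]
    simp only [Fintype.prod_option, Equiv.piOptionEquivProd_apply]

end NonnegativeSums

section Translation

variable {X : Type*} (T : Equiv.Perm X)

lemma apply_zpow_of_apply_eq_add {A Y : Type*} [AddGroup A] {F : A → X → Y} {a : A}
    (hF : ∀ r x, F r (T x) = F (r + a) x) (n : ℤ) (r : A) (x : X) :
    F r ((T ^ n) x) = F (r + n • a) x := by
  induction n generalizing r x with
  | zero => simp
  | succ n ih => rw [zpow_add_one, Equiv.Perm.mul_apply, ih, hF, add_assoc, add_one_zsmul]
  | pred n ih =>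
    have hF_inv (r : A) (x : X) : F r (T⁻¹ x) = F (r - a) x := by
      simpa using (hF (r - a) (T⁻¹ x)).symm
    rw [zpow_sub_one, Equiv.Perm.mul_apply, ih, hF_inv, sub_one_zsmul, sub_eq_add_neg, add_assoc]

lemma apply_zpow_of_apply_eq_add_one {f : X → ℤ} (hf : ∀ x, f (T x) = f x + 1) (n : ℤ) (x : X) :
    f ((T ^ n) x) = f x + n := by
  have hF (r : ℤ) (x : X) : f (T x) + r = f x + (r + 1) := by rw [hf]; ring
  simpa using apply_zpow_of_apply_eq_add T (F := fun r x => f x + r) hF n 0 x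

/-- If `T` raises an integer-valued height `f` by `1`, every point is obtained from a unique point
of height `0` by applying a power of `T`, the exponent being its height. -/
def equivIntProdHeightZero (f : X → ℤ) (hf : ∀ x, f (T x) = f x + 1) :
    X ≃ ℤ × {x // f x = 0} where
  toFun x := (f x, ⟨(T ^ (-f x)) x, by rw [apply_zpow_of_apply_eq_add_one T hf, add_neg_cancel]⟩)
  invFun p := (T ^ p.1) p.2
  left_inv x := by simp
  right_inv := by
    rintro ⟨n, x, hx⟩
    have hn : f ((T ^ n) x) = n := by rw [apply_zpow_of_apply_eq_add_one T hf, hx, zero_add]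
    simp [hn]

end Translation

section Block

lemma sum_const_add_sq_of_sum_eq_zero {ι R : Type*} [Fintype ι] [CommSemiring R] (s : R) {x : ι → R}
    (hx : ∑ i, x i = 0) :
    ∑ i, (s + x i) ^ 2 = Fintype.card ι * s ^ 2 + ∑ i, x i ^ 2 := by
  simp [add_sq, Finset.sum_add_distrib, ← Finset.mul_sum, hx]

/-- The Weyl vector `ρ` of `A_{l-1}` divided by the Coxeter number `l`, with coordinates indexed
from `0`. -/
noncomputable def scaledWeylVector (l : ℕ) (i : Fin l) : ℝ :=
  ((l : ℝ) - 1 - 2 * (i.val : ℝ)) / (2 * l)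

/-- The energy `½ (r + ρ/l + k)²` of a point `k` of `ℤ^l`, where the number `r` stands for the
constant vector `(r, …, r)`. -/
noncomputable def blockEnergy {l : ℕ} (r : ℝ) (k : Fin l → ℤ) : ℝ :=
  (1 / 2 : ℝ) * ∑ i, ((r + scaledWeylVector l i) + (k i : ℝ)) ^ 2

/-- The rotation `(k₀, …, k_{l-1}) ↦ (k₁, …, k_{l-1}, k₀ + 1)` of `ℤ^l`. It generates the
length-zero elements of the extended affine Weyl group of `GL_l`. -/
def affineRotate (l : ℕ) [NeZero l] : Equiv.Perm (Fin l → ℤ) :=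
  (Equiv.addRight (Pi.single 0 1)).trans ((finRotate l).symm.arrowCongr (Equiv.refl ℤ))

variable {l : ℕ}

lemma sum_scaledWeylVector : ∑ i, scaledWeylVector l i = 0 := by
  have h_rev (i : Fin l) : scaledWeylVector l i.rev = -scaledWeylVector l i := by
    rw [scaledWeylVector, scaledWeylVector, Fin.val_rev, Nat.cast_sub i.isLt]
    push_cast
    ring
  have h_neg : ∑ i, scaledWeylVector l i = -∑ i, scaledWeylVector l i := by
    conv_lhs => rw [← Equiv.sum_comp Fin.revPerm]
    rw [← Finset.sum_neg_distrib]
    exact Finset.sum_congr rfl fun i _ => h_rev i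
  exact self_eq_neg.mp h_neg

lemma blockEnergy_of_sum_eq_zero (s : ℝ) {m : Fin l → ℤ} (hm : ∑ i, m i = 0) :
    blockEnergy s m =
      l * s ^ 2 / 2 + (1 / 2 : ℝ) * ∑ i, ((m i : ℝ) + scaledWeylVector l i) ^ 2 := by
  have h_sum : ∑ i, ((m i : ℝ) + scaledWeylVector l i) = 0 := by
    rw [Finset.sum_add_distrib, sum_scaledWeylVector, add_zero]
    exact_mod_cast hm
  have h_expand := sum_const_add_sq_of_sum_eq_zero s h_sum
  rw [Fintype.card_fin] at h_expand
  simp only [blockEnergy, add_assoc, add_comm (scaledWeylVector l _), h_expand]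
  ring

variable [NeZero l]

lemma affineRotate_apply (k : Fin l → ℤ) (i : Fin l) :
    affineRotate l k i = k (finRotate l i) + Pi.single (M := fun _ => ℤ) 0 1 (finRotate l i) :=
  rfl

lemma sum_affineRotate (k : Fin l → ℤ) : ∑ i, affineRotate l k i = ∑ i, k i + 1 := by
  simp only [affineRotate_apply]
  rw [Equiv.sum_comp (finRotate l) fun i => k i + Pi.single (M := fun _ => ℤ) 0 1 i,
    Finset.sum_add_distrib, Finset.sum_pi_single']
  simp

lemma scaledWeylVector_finRotate (i : Fin l) :
    scaledWeylVector l (finRotate l i) + 1 / l =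
      scaledWeylVector l i + (Pi.single (M := fun _ => ℤ) 0 1 (finRotate l i) : ℤ) := by
  obtain ⟨n, rfl⟩ := Nat.exists_eq_succ_of_ne_zero (NeZero.ne l)
  have hn : (n : ℝ) + 1 ≠ 0 := by positivity
  induction i using Fin.lastCases with
  | last =>
    simp only [scaledWeylVector, finRotate_apply, Fin.last_add_one, Fin.val_last, Fin.val_zero,
      Nat.succ_eq_add_one, Nat.cast_add, Nat.cast_one, Nat.cast_zero, Pi.single_eq_same,
      Int.cast_one]
    field_simp
    ring
  | cast i =>
    simp only [scaledWeylVector, finRotate_apply, Fin.coeSucc_eq_succ, Fin.val_succ,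
      Fin.val_castSucc, Nat.succ_eq_add_one, Nat.cast_add, Nat.cast_one,
      Pi.single_eq_of_ne (Fin.succ_ne_zero i), Int.cast_zero]
    field_simp
    ring

lemma blockEnergy_affineRotate (r : ℝ) (k : Fin l → ℤ) :
    blockEnergy r (affineRotate l k) = blockEnergy (r + 1 / l) k := by
  rw [blockEnergy, blockEnergy,
    ← Equiv.sum_comp (finRotate l) fun i => (r + 1 / l + scaledWeylVector l i + (k i : ℝ)) ^ 2]
  congr 1
  refine Finset.sum_congr rfl fun i _ => congrArg (· ^ 2) ?_
  have h_rotate := scaledWeylVector_finRotate i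
  rw [affineRotate_apply]
  push_cast
  linarith

variable (l) in
/-- Splits a point of `ℤ^l` into its coordinate sum and a point of the root lattice `A_{l-1}`. -/
def blockEquiv : (Fin l → ℤ) ≃ ℤ × {m : Fin l → ℤ // ∑ i, m i = 0} :=
  equivIntProdHeightZero (affineRotate l) (fun k => ∑ i, k i) sum_affineRotate

lemma blockEnergy_blockEquiv_symm (r : ℝ) (p : ℤ × {m : Fin l → ℤ // ∑ i, m i = 0}) :
    blockEnergy r ((blockEquiv l).symm p) =
      ((p.1 : ℝ) + l * r) ^ 2 / (2 * l) +
        (1 / 2 : ℝ) * ∑ i, ((p.2.1 i : ℝ) + scaledWeylVector l i) ^ 2 := by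
  have hl : (l : ℝ) ≠ 0 := NeZero.ne _
  have h_translate : blockEnergy r ((blockEquiv l).symm p) = blockEnergy (r + p.1 / l) p.2.1 := by
    have h_zpow :=
      apply_zpow_of_apply_eq_add (affineRotate l) blockEnergy_affineRotate p.1 r p.2.1
    rwa [zsmul_eq_mul, mul_one_div] at h_zpow
  rw [h_translate, blockEnergy_of_sum_eq_zero _ p.2.2]
  congr 1
  field_simp
  ring

end Block

section Lattice

variable {ι : Type*} (l : ι → ℕ) [∀ j, NeZero (l j)]

/-- Splits every block of a point of `ℤ^N` into its coordinate sum and a point of `A_{l_j-1}`. -/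
def blocksEquiv :
    (((j : ι) × Fin (l j)) → ℤ) ≃ (ι → ℤ) × (∀ j, {m : Fin (l j) → ℤ // ∑ i, m i = 0}) :=
  (Equiv.piCurry fun (j : ι) (_ : Fin (l j)) => ℤ).trans <|
    (Equiv.piCongrRight fun j => blockEquiv (l j)).trans <|
      Equiv.arrowProdEquivProdArrow ι (fun _ => ℤ) fun j => {m : Fin (l j) → ℤ // ∑ i, m i = 0}

variable [Fintype ι] (S : Set ℤ)

lemma sum_blocksEquiv_fst (k : ((j : ι) × Fin (l j)) → ℤ) :
    ∑ j, (blocksEquiv l k).1 j = ∑ i, k i :=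
  (Fintype.sum_sigma k).symm

/-- The restriction of `blocksEquiv` to the lattice `L_S`, whose defining condition only involves
the coordinate sums of the blocks. -/
def latticeEquiv :
    {k : ((j : ι) × Fin (l j)) → ℤ // (∑ i, k i) ∈ S} ≃
      {n : ι → ℤ // (∑ j, n j) ∈ S} × (∀ j, {m : Fin (l j) → ℤ // ∑ i, m i = 0}) :=
  ((blocksEquiv l).subtypeEquiv fun k => by rw [sum_blocksEquiv_fst]).trans
    (Equiv.prodSubtypeFstEquivSubtypeProd (p := fun n : ι → ℤ => (∑ j, n j) ∈ S))

lemma latticeEquiv_symm_apply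
    (p : {n : ι → ℤ // (∑ j, n j) ∈ S} × (∀ j, {m : Fin (l j) → ℤ // ∑ i, m i = 0}))
    (i : (j : ι) × Fin (l j)) :
    ((latticeEquiv l S).symm p).1 i = (blockEquiv (l i.1)).symm (p.1.1 i.1, p.2 i.1) i.2 :=
  rfl

lemma sum_sq_latticeEquiv_symm (r : ι → ℝ)
    (p : {n : ι → ℤ // (∑ j, n j) ∈ S} × (∀ j, {m : Fin (l j) → ℤ // ∑ i, m i = 0})) :
    (1 / 2 : ℝ) * ∑ i : (j : ι) × Fin (l j),
        ((r i.1 + scaledWeylVector (l i.1) i.2) + (((latticeEquiv l S).symm p).1 i : ℝ)) ^ 2 =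
      ∑ j, ((p.1.1 j : ℝ) + (l j : ℝ) * r j) ^ 2 / (2 * l j) +
        ∑ j, (1 / 2 : ℝ) * ∑ i, (((p.2 j).1 i : ℝ) + scaledWeylVector (l j) i) ^ 2 := by
  simp only [latticeEquiv_symm_apply]
  rw [Fintype.sum_sigma, Finset.mul_sum, ← Finset.sum_add_distrib]
  exact Finset.sum_congr rfl fun j _ => blockEnergy_blockEquiv_symm (r j) (p.1.1 j, p.2 j)

end Lattice

/-- Factorization of the lattice theta function `Θ_{L_S}(v;q)` (with
    `L_S = {k ∈ ℤ^N : ∑ k_i ∈ S}` and `v` the concatenation of the blocks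
    `(r_j + (l_j − 1 − 2m)/(2l_j))_{m=0,…,l_j−1}`, components indexed by the
    sigma type `(j : Fin K) × Fin (l j)`) into a product of `A_{l_j−1}` theta
    functions and a zero-mode lattice sum. -/
theorem stmt2 (K : ℕ) (hK : 1 ≤ K) (l : Fin K → ℕ) (hl : ∀ j, 0 < l j)
    (r : Fin K → ℝ) (S : Set ℤ) (q : ℝ) (hq0 : 0 < q) (hq1 : q < 1) :
    (∑' k : {k : ((j : Fin K) × Fin (l j)) → ℤ // (∑ i, k i) ∈ S},
        q ^ ((1 / 2 : ℝ) * ∑ i : (j : Fin K) × Fin (l j),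
          ((r i.1 + ((l i.1 : ℝ) - 1 - 2 * (i.2.val : ℝ)) / (2 * l i.1)) + (k.1 i : ℝ)) ^ 2)) =
      (∏ j : Fin K, ∑' m : {m : Fin (l j) → ℤ // ∑ i, m i = 0},
          q ^ ((1 / 2 : ℝ) * ∑ i : Fin (l j),
            ((m.1 i : ℝ) + ((l j : ℝ) - 1 - 2 * (i.val : ℝ)) / (2 * l j)) ^ 2)) *
        (∑' n : {n : Fin K → ℤ // (∑ j, n j) ∈ S},
          q ^ (∑ j : Fin K, ((n.1 j : ℝ) + (l j : ℝ) * r j) ^ 2 / (2 * l j))) := by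
  have (j : Fin K) : NeZero (l j) := ⟨(hl j).ne'⟩
  have hq (x : ℝ) : 0 ≤ q ^ x := Real.rpow_nonneg hq0.le x
  rw [prod_tsum_of_nonneg fun _ _ => hq _, mul_comm,
    tsum_mul_tsum_of_nonneg (fun _ => hq _) fun _ => Finset.prod_nonneg fun _ _ => hq _,
    ← (latticeEquiv l S).symm.tsum_eq]
  refine tsum_congr fun p => ?_
  rw [← Real.rpow_sum_of_pos hq0, ← Real.rpow_add hq0]
  exact congrArg (q ^ ·) (sum_sq_latticeEquiv_symm l S r p)
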